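/- The families of relations ⊳_{m,n} and ⊲_{m,n} (n ≥ m ≥ 1) satisfy: (1) u ⊳_{1,n} v if and only if u ⊲_{1,n} v, if and only if u and v have the same scattered subwords of length at most n. (2) For m ≥ 2: u ⊳_{m,n} v if and only if alph(u) = alph(v), u ⊲_{m-1,n-1} v, and for each letter a ∈ alph(u) the a-left factorizations u = u_- a u_+ and v = v_- a v_+ satisfy u_- ⊲_{m-1,n-1} v_- and u_+ ⊳_{m,n-1} v_+ (u_+ ⊳_{m-1,n-1} v_+ if n = m). (3) For m ≥ 2: u ⊲_{m,n} v if and only if alph(u) = alph(v), u ⊳_{m-1,n-1} v, and for each letter a ∈ alph(u) the a-right factorizations u = u_- a u_+ and v = v_- a v_+ satisfy u_+ ⊳_{m-1,n-1} v_+ and u_- ⊲_{m,n-1} v_- (u_- ⊲_{m-1,n-1} v_- if n = m). -/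

import Mathlib

namespace RankerPaper

variable {A : Type*} [DecidableEq A]

/-- Letters of rankers: `X a` ("next `a` to the right") and `Y a` ("next `a` to the left"). -/
inductive RLetter (A : Type*) where
  | X : A → RLetter A
  | Y : A → RLetter A
  deriving DecidableEq

/-- Least `a`-position of `u` strictly greater than `q` (positions are 1-indexed). -/
def nextOcc (u : List A) (a : A) (q : ℕ) : Option ℕ :=
  ((List.range (u.length + 2)).filter (fun i => decide (q < i ∧ u[i-1]? = some a))).head?

/-- Greatest `a`-position of `u` strictly less than `q` (positions are 1-indexed). -/
def prevOcc (u : List A) (a : A) (q : ℕ) : Option ℕ :=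
  ((List.range (u.length + 2)).filter
    (fun i => decide (1 ≤ i ∧ i < q ∧ u[i-1]? = some a))).getLast?

/-- One evaluation step of a ranker letter from position `q`. -/
def stepR (u : List A) : RLetter A → ℕ → Option ℕ
  | .X a, q => nextOcc u a q
  | .Y a, q => prevOcc u a q

/-- Evaluation of a ranker from position `q`, processing letters left to right. -/
def evalFrom (u : List A) : List (RLetter A) → ℕ → Option ℕ
  | [], q => some q
  | z :: r, q => (stepR u z q).bind (evalFrom u r)

/-- Starting position: `0` for an `X`-letter, `|u|+1` for a `Y`-letter. -/
def startPos (u : List A) : RLetter A → ℕ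
  | .X _ => 0
  | .Y _ => u.length + 1

/-- The position `r(u)` defined by the ranker `r` on `u` (`none` if undefined;
empty rankers are considered undefined, rankers being nonempty words). -/
def evalR (u : List A) (r : List (RLetter A)) : Option ℕ :=
  match r with
  | [] => none
  | z :: t => evalFrom u (z :: t) (startPos u z)

/-- `r` is defined on `u`. -/
def Defined (u : List A) (r : List (RLetter A)) : Prop := (evalR u r).isSome

/-- The position `r(u)` (defaulting to `0` when undefined). -/
def pos (u : List A) (r : List (RLetter A)) : ℕ := (evalR u r).getD 0

/-- Do two ranker letters have the same direction? -/
def sameDir : RLetter A → RLetter A → Bool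
  | .X _, .X _ => true
  | .Y _, .Y _ => true
  | _, _ => false

/-- Number of (alternating) blocks of a ranker. -/
def numBlocks : List (RLetter A) → ℕ
  | [] => 0
  | [_] => 1
  | z :: w :: t => (if sameDir z w then 0 else 1) + numBlocks (w :: t)

def startsX (r : List (RLetter A)) : Prop := ∃ a t, r = RLetter.X a :: t
def startsY (r : List (RLetter A)) : Prop := ∃ a t, r = RLetter.Y a :: t
def endsX (r : List (RLetter A)) : Prop := ∃ a, r.getLast? = some (RLetter.X a)
def endsY (r : List (RLetter A)) : Prop := ∃ a, r.getLast? = some (RLetter.Y a)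

/-- `R^X_{m,n}`: rankers with exactly `m` blocks, depth `n`, starting with an `X`-block. -/
def RX (m n : ℕ) (r : List (RLetter A)) : Prop :=
  numBlocks r = m ∧ r.length = n ∧ startsX r

/-- `R^Y_{m,n}`: rankers with exactly `m` blocks, depth `n`, starting with a `Y`-block. -/
def RY (m n : ℕ) (r : List (RLetter A)) : Prop :=
  numBlocks r = m ∧ r.length = n ∧ startsY r

/-- `uR^X_{m,n}`. -/
def uRX (m n : ℕ) (r : List (RLetter A)) : Prop :=
  (∃ m' n', m' ≤ m ∧ n' ≤ n ∧ RX m' n' r) ∨ (∃ m' n', m' < m ∧ n' < n ∧ RY m' n' r)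

/-- `uR^Y_{m,n}`. -/
def uRY (m n : ℕ) (r : List (RLetter A)) : Prop :=
  (∃ m' n', m' ≤ m ∧ n' ≤ n ∧ RY m' n' r) ∨ (∃ m' n', m' < m ∧ n' < n ∧ RX m' n' r)

/-- `uR_{m,n} = uR^X_{m,n} ∪ uR^Y_{m,n}`. -/
def uR (m n : ℕ) (r : List (RLetter A)) : Prop := uRX m n r ∨ uRY m n r

/-- `uR^X_m = ∪_{n ≥ m} uR^X_{m,n}`. -/
def uRXm (m : ℕ) (r : List (RLetter A)) : Prop := ∃ n, m ≤ n ∧ uRX m n r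

/-- `uR^Y_m = ∪_{n ≥ m} uR^Y_{m,n}`. -/
def uRYm (m : ℕ) (r : List (RLetter A)) : Prop := ∃ n, m ≤ n ∧ uRY m n r

/-- `r = Z₁ ⋯ Z_n` is condensed on `u`: it is defined on `u` and there is a chain of
open intervals `(0;|u|+1) = (i₀;j₀) ⊃ (i₁;j₁) ⊃ ⋯ ⊃ (i_{n-1};j_{n-1}) ∋ r(u)`
updated according to the pairs `Z_ℓ Z_{ℓ+1}`. -/
def Condensed (u : List A) (r : List (RLetter A)) : Prop :=
  ∃ (p : ℕ) (i j : ℕ → ℕ),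
    evalR u r = some p ∧
    i 0 = 0 ∧ j 0 = u.length + 1 ∧
    (∀ ℓ a b, 1 ≤ ℓ → r[ℓ-1]? = some (RLetter.X a) → r[ℓ]? = some (RLetter.X b) →
        nextOcc u a (i (ℓ-1)) = some (i ℓ) ∧ j ℓ = j (ℓ-1)) ∧
    (∀ ℓ a b, 1 ≤ ℓ → r[ℓ-1]? = some (RLetter.Y a) → r[ℓ]? = some (RLetter.Y b) →
        i ℓ = i (ℓ-1) ∧ prevOcc u a (j (ℓ-1)) = some (j ℓ)) ∧
    (∀ ℓ a b, 1 ≤ ℓ → r[ℓ-1]? = some (RLetter.X a) → r[ℓ]? = some (RLetter.Y b) →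
        i ℓ = i (ℓ-1) ∧ nextOcc u a (i (ℓ-1)) = some (j ℓ)) ∧
    (∀ ℓ a b, 1 ≤ ℓ → r[ℓ-1]? = some (RLetter.Y a) → r[ℓ]? = some (RLetter.X b) →
        prevOcc u a (j (ℓ-1)) = some (i ℓ) ∧ j ℓ = j (ℓ-1)) ∧
    (∀ ℓ, 1 ≤ ℓ → ℓ < r.length →
        i (ℓ-1) ≤ i ℓ ∧ j ℓ ≤ j (ℓ-1) ∧ (i (ℓ-1) < i ℓ ∨ j ℓ < j (ℓ-1))) ∧
    i (r.length - 1) < p ∧ p < j (r.length - 1)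

/-- `u` and `v` agree on rankers from the set `R`. -/
def AgreeDef (R : List (RLetter A) → Prop) (u v : List A) : Prop :=
  ∀ r, R r → (Defined u r ↔ Defined v r)

/-- `u` and `v` agree on condensed rankers from the set `R`. -/
def AgreeCond (R : List (RLetter A) → Prop) (u v : List A) : Prop :=
  ∀ r, R r → (Condensed u r ↔ Condensed v r)

/-- `u ⊳_{m,n} v`. -/
def trir (m n : ℕ) (u v : List A) : Prop := AgreeCond (uRX m n) u v

/-- `u ⊲_{m,n} v`. -/
def tril (m n : ℕ) (u v : List A) : Prop := AgreeCond (uRY m n) u v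

/-- The alphabet (set of letters) of a word. -/
def alph (u : List A) : Finset A := u.toFinset

/-- Condition (WI 1). -/
def WI1 (m n : ℕ) (u v : List A) : Prop := AgreeDef (uR m n) u v

/-- Condition (WI 2). -/
def WI2 (m n : ℕ) (u v : List A) : Prop :=
  ∀ r r', uR m n r → uR (m-1) (n-1) r' →
    Defined u r → Defined v r → Defined u r' → Defined v r' →
    compare (pos u r) (pos u r') = compare (pos v r) (pos v r')

/-- Condition (WI 3). -/
def WI3 (m n : ℕ) (u v : List A) : Prop :=
  ∀ r r', uR m n r → uR m (n-1) r' →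
    ((endsX r ∧ endsY r') ∨ (endsY r ∧ endsX r')) →
    Defined u r → Defined v r → Defined u r' → Defined v r' →
    compare (pos u r) (pos u r') = compare (pos v r) (pos v r')

/-- Condition (WI 1c). -/
def WI1c (m n : ℕ) (u v : List A) : Prop := AgreeCond (uR m n) u v

/-- Condition (WI 2c). -/
def WI2c (m n : ℕ) (u v : List A) : Prop :=
  ∀ r r', uR m n r → uR (m-1) (n-1) r' →
    Condensed u r → Condensed v r → Condensed u r' → Condensed v r' →
    compare (pos u r) (pos u r') = compare (pos v r) (pos v r')

/-- Condition (WI 3c). -/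
def WI3c (m n : ℕ) (u v : List A) : Prop :=
  ∀ r r', uR m n r → uR m (n-1) r' →
    ((endsX r ∧ endsY r') ∨ (endsY r ∧ endsX r')) →
    Condensed u r → Condensed v r → Condensed u r' → Condensed v r' →
    compare (pos u r) (pos u r') = compare (pos v r) (pos v r')

/-! Condensedness is local: the first letter of a ranker cuts the word at its first (or last)
occurrence, and the rest of the ranker must be condensed on the factor it moves into. For a word
`u = u₋ a u₊` with `a ∉ u₋`, the rankers of `u` that start with `X a` are therefore the rankers of
`u₋` that start with a `Y`-letter and those of `u₊` that start with an `X`-letter. A ranker of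
`u₋` that starts with an `X`-letter is condensed on `u₋` exactly when it is condensed on `u` and
its leading `X`-block fits into `u₋`; this is a scattered subword condition on `u₋`, hence a
condition on rankers of `u` with at most two blocks. The same argument from the right end treats
`u₊`. Word reversal exchanges `⊳` and `⊲`. -/

section Factorization

variable {α : Type*}

theorem getElem?_middle {x w y : List α} {k : ℕ}
    (hk : k ∈ Set.Ioo x.length (x.length + w.length + 1)) :
    (x ++ w ++ y)[k - 1]? = w[k - 1 - x.length]? := by
  obtain ⟨hxk, hkw⟩ := hk
  rw [List.getElem?_append_left (by simp only [List.length_append]; omega),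
    List.getElem?_append_right (by omega)]

namespace RLetter

/-- The alphabet letter carried by a ranker letter. -/
def letter : RLetter α → α
  | X a => a
  | Y a => a

/-- The ranker letter with the same alphabet letter and the opposite direction; it is the
counterpart on rankers of word reversal. -/
def flip : RLetter α → RLetter α
  | X a => Y a
  | Y a => X a

/-- The end of the interval `I = (i; j)` from which a ranker letter starts its search. -/
def anchor : RLetter α → ℕ × ℕ → ℕ
  | X _, I => I.1
  | Y _, I => I.2

/-- The part of the interval `I = (i; j)` into which a ranker letter moves from position `p`. -/
def cut : RLetter α → ℕ → ℕ × ℕ → ℕ × ℕ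
  | X _, p, I => (p, I.2)
  | Y _, p, I => (I.1, p)

/-- The factor into which a ranker letter moves from the position between `w₁` and `w₂`. -/
def side : RLetter α → List α → List α → List α
  | X _, _, w₂ => w₂
  | Y _, w₁, _ => w₁

theorem flip_flip (z : RLetter α) : z.flip.flip = z := by cases z <;> rfl

theorem side_flip (z : RLetter α) (w₁ w₂ : List α) :
    z.flip.side w₂.reverse w₁.reverse = (z.side w₁ w₂).reverse := by
  cases z <;> rfl

end RLetter

theorem startPos_eq_anchor (u : List α) (z : RLetter α) :
    startPos u z = z.anchor (0, u.length + 1) := by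
  cases z <;> rfl

/-- `w = w₁ a w₂` is the `a`-left factorization of `w` for the ranker letter `X a`, and the
`a`-right factorization for `Y a`. -/
def IsFactorization : RLetter α → List α → List α → List α → Prop
  | .X a, w, w₁, w₂ => w = w₁ ++ a :: w₂ ∧ a ∉ w₁
  | .Y a, w, w₁, w₂ => w = w₁ ++ a :: w₂ ∧ a ∉ w₂

theorem isFactorization_flip {z : RLetter α} {w w₁ w₂ : List α} :
    IsFactorization z.flip w.reverse w₂.reverse w₁.reverse ↔ IsFactorization z w w₁ w₂ := by
  cases z <;> simp [RLetter.flip, IsFactorization, List.reverse_eq_iff]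

namespace IsFactorization

variable {z : RLetter α} {w w₁ w₂ : List α}

theorem eq_append (h : IsFactorization z w w₁ w₂) : w = w₁ ++ z.letter :: w₂ := by
  cases z <;> exact h.1

theorem letter_mem (h : IsFactorization z w w₁ w₂) : z.letter ∈ w := by
  simp [h.eq_append]

theorem exists_of_letter_mem (h : z.letter ∈ w) : ∃ w₁ w₂, IsFactorization z w w₁ w₂ := by
  cases z with
  | X a => exact List.eq_append_cons_of_mem h
  | Y a =>
    obtain ⟨s, t, hw, hs⟩ := List.eq_append_cons_of_mem (List.mem_reverse.2 h)
    exact ⟨t.reverse, s.reverse, isFactorization_flip.1 (by simpa using ⟨hw, hs⟩)⟩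

theorem unique_X {a : α} {v₁ v₂ : List α} (hw : IsFactorization (.X a) w w₁ w₂)
    (hv : IsFactorization (.X a) w v₁ v₂) : w₁ = v₁ ∧ w₂ = v₂ := by
  obtain ⟨rfl, hw₁⟩ := hw
  obtain ⟨h, hv₁⟩ := hv
  rcases List.append_eq_append_iff.1 h with ⟨_ | ⟨b, s⟩, h₁, h₂⟩ | ⟨_ | ⟨b, s⟩, h₁, h₂⟩ <;> simp_all

theorem unique {v₁ v₂ : List α} (hw : IsFactorization z w w₁ w₂)
    (hv : IsFactorization z w v₁ v₂) : w₁ = v₁ ∧ w₂ = v₂ := by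
  cases z with
  | X a => exact hw.unique_X hv
  | Y a =>
    have h := (isFactorization_flip.2 hw).unique_X (isFactorization_flip.2 hv)
    exact ⟨List.reverse_injective h.2, List.reverse_injective h.1⟩

theorem append_right {a : α} (h : IsFactorization (.X a) w w₁ w₂) (y : List α) :
    IsFactorization (.X a) (w ++ y) w₁ (w₂ ++ y) :=
  ⟨by simp [h.1], h.2⟩

theorem cons_sublist_iff {a : α} {s : List α} (h : IsFactorization (.X a) w w₁ w₂) :
    (a :: s).Sublist w ↔ s.Sublist w₂ := by
  obtain ⟨rfl, ha⟩ := h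
  induction w₁ with
  | nil => exact List.cons_sublist_cons
  | cons b w₁ ih =>
    obtain ⟨hab, ha⟩ : a ≠ b ∧ a ∉ w₁ := by simpa using ha
    exact ⟨fun hs => (ih ha).1 (hs.of_cons_of_ne hab), fun hs => ((ih ha).2 hs).cons b⟩

end IsFactorization

/-- The condensed rankers of `w`, described by recursion: the first letter of the ranker
factorizes `w`, and the rest of the ranker is condensed on the factor into which its own first
letter moves. The empty ranker counts as condensed. -/
def FactorCondensed : List (RLetter α) → List α → Prop
  | [], _ => True
  | z :: t, w => ∃ w₁ w₂, IsFactorization z w w₁ w₂ ∧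
      ∀ y ∈ t.head?, FactorCondensed t (y.side w₁ w₂)

theorem FactorCondensed.letter_mem {z : RLetter α} {t : List (RLetter α)} {w : List α}
    (h : FactorCondensed (z :: t) w) : z.letter ∈ w :=
  let ⟨_, _, hw, _⟩ := h
  hw.letter_mem

theorem factorCondensed_singleton {z : RLetter α} {w : List α} :
    FactorCondensed [z] w ↔ z.letter ∈ w := by
  refine ⟨FactorCondensed.letter_mem, fun h => ?_⟩
  obtain ⟨w₁, w₂, hw⟩ := IsFactorization.exists_of_letter_mem h
  exact ⟨w₁, w₂, hw, by simp⟩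

theorem IsFactorization.factorCondensed_cons_cons {z y : RLetter α} {t : List (RLetter α)}
    {w w₁ w₂ : List α} (h : IsFactorization z w w₁ w₂) :
    FactorCondensed (z :: y :: t) w ↔ FactorCondensed (y :: t) (y.side w₁ w₂) := by
  constructor
  · rintro ⟨v₁, v₂, hv, ht⟩
    obtain ⟨rfl, rfl⟩ := h.unique hv
    exact ht y rfl
  · intro ht
    refine ⟨w₁, w₂, h, fun y' hy' => ?_⟩
    obtain rfl := Option.some.inj hy'
    exact ht

end Factorization

section Intervals

theorem getElem?_eq_of_stepR {u : List A} {z : RLetter A} {q p : ℕ} (h : stepR u z q = some p) :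
    u[p - 1]? = some z.letter := by
  cases z with
  | X a => exact (of_decide_eq_true (List.mem_filter.1 (List.mem_of_head? h)).2).2
  | Y a => exact (of_decide_eq_true (List.mem_filter.1 (List.mem_of_getLast? h)).2).2.2

theorem nextOcc_eq_some {u : List A} {a : A} {q p : ℕ} (hqp : q < p) (hp : u[p - 1]? = some a)
    (hmin : ∀ k, q < k → k < p → u[k - 1]? ≠ some a) : nextOcc u a q = some p := by
  have hlen := (List.getElem?_eq_some_iff.1 hp).1
  rw [nextOcc, List.head?_filter, List.find?_range_eq_some]
  refine ⟨by simp [hqp, hp], List.mem_range.2 (by omega), fun k hk => ?_⟩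
  simpa [or_iff_not_imp_left] using fun hqk => hmin k hqk hk

theorem getLast?_filter_range_eq_some {P : ℕ → Bool} {n p : ℕ} (hpn : p < n) (hp : P p)
    (hmax : ∀ k, p < k → k < n → ¬ P k) : ((List.range n).filter P).getLast? = some p := by
  obtain ⟨d, rfl⟩ := Nat.exists_eq_add_of_lt hpn
  have htail : ((List.range d).map (p + 1 + ·)).filter P = [] := by
    simp only [List.filter_eq_nil_iff, List.mem_map, List.mem_range]
    rintro _ ⟨k, hk, rfl⟩
    exact hmax _ (by omega) (by omega)
  rw [show p + d + 1 = p + 1 + d by omega, List.range_add, List.filter_append, htail,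
    List.range_succ, List.filter_append]
  simp [hp]

theorem prevOcc_eq_some {u : List A} {a : A} {q p : ℕ} (hpos : 1 ≤ p) (hpq : p < q)
    (hp : u[p - 1]? = some a) (hmax : ∀ k, p < k → k < q → u[k - 1]? ≠ some a) :
    prevOcc u a q = some p := by
  have hlen := (List.getElem?_eq_some_iff.1 hp).1
  refine getLast?_filter_range_eq_some (by omega) (by simp [hpos, hpq, hp]) fun k hk _ => ?_
  simpa using fun _ hkq => hmax k hk hkq

theorem IsFactorization.stepR_anchor {z : RLetter A} {w w₁ w₂ : List A}
    (h : IsFactorization z w w₁ w₂) (x y : List A) :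
    stepR (x ++ w ++ y) z (z.anchor (x.length, x.length + w.length + 1)) =
      some (x.length + w₁.length + 1) := by
  have hlen : w.length = w₁.length + w₂.length + 1 := by simp [h.eq_append]; omega
  have hletter : (x ++ w ++ y)[x.length + w₁.length]? = some z.letter := by
    simp [h.eq_append]
  cases z with
  | X a =>
    refine nextOcc_eq_some (by simp only [RLetter.anchor]; omega) hletter fun k hk hkp hka => ?_
    simp only [RLetter.anchor] at hk
    rw [getElem?_middle ⟨hk, by omega⟩, h.1, List.getElem?_append_left (by omega)] at hka
    exact h.2 (List.mem_of_getElem? hka)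
  | Y a =>
    refine prevOcc_eq_some (by omega) (by simp only [RLetter.anchor]; omega) hletter
      fun k hpk hk hka => ?_
    simp only [RLetter.anchor] at hk
    obtain ⟨d, rfl⟩ := Nat.exists_eq_add_of_lt hpk
    rw [getElem?_middle ⟨by omega, hk⟩, h.1,
      show x.length + w₁.length + 1 + d + 1 - 1 - x.length = w₁.length + (d + 1) by omega,
      List.getElem?_append_right (by omega), Nat.add_sub_cancel_left,
      List.getElem?_cons_succ] at hka
    exact h.2 (List.mem_of_getElem? hka)

theorem stepR_anchor_eq_some_iff {z : RLetter A} {x w y : List A} {p : ℕ} :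
    (stepR (x ++ w ++ y) z (z.anchor (x.length, x.length + w.length + 1)) = some p ∧
        p ∈ Set.Ioo x.length (x.length + w.length + 1)) ↔
      ∃ w₁ w₂, IsFactorization z w w₁ w₂ ∧ p = x.length + w₁.length + 1 := by
  constructor
  · rintro ⟨hp, hmem⟩
    have hletter := getElem?_eq_of_stepR hp
    rw [getElem?_middle hmem] at hletter
    obtain ⟨w₁, w₂, hw⟩ :=
      IsFactorization.exists_of_letter_mem (List.mem_of_getElem? hletter)
    exact ⟨w₁, w₂, hw, Option.some.inj (hp.symm.trans (hw.stepR_anchor x y))⟩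
  · rintro ⟨w₁, w₂, hw, rfl⟩
    have hlen := congrArg List.length hw.eq_append
    simp only [List.length_append, List.length_cons] at hlen
    exact ⟨hw.stepR_anchor x y, by omega, by omega⟩

/-- The rankers condensed on `u` relative to the interval `I`, described by recursion: each letter
must find a position inside the current interval, which is then cut at that position. The empty
ranker counts as condensed. -/
def CondensedIn (u : List A) : List (RLetter A) → ℕ × ℕ → Prop
  | [], _ => True
  | z :: t, I => ∃ p, stepR u z (z.anchor I) = some p ∧ p ∈ Set.Ioo I.1 I.2 ∧
      ∀ y ∈ t.head?, CondensedIn u t (y.cut p I)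

theorem condensedIn_append_iff (x w y : List A) (r : List (RLetter A)) :
    CondensedIn (x ++ w ++ y) r (x.length, x.length + w.length + 1) ↔ FactorCondensed r w := by
  induction r generalizing x w y with
  | nil => exact Iff.rfl
  | cons z t ih =>
    simp only [CondensedIn, ← and_assoc, stepR_anchor_eq_some_iff, FactorCondensed]
    have htail (w₁ w₂ : List A) (hw : IsFactorization z w w₁ w₂) :
        (∀ s ∈ t.head?, CondensedIn (x ++ w ++ y) t
          (s.cut (x.length + w₁.length + 1) (x.length, x.length + w.length + 1))) ↔
        ∀ s ∈ t.head?, FactorCondensed t (s.side w₁ w₂) := by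
      refine forall₂_congr fun s _ => ?_
      obtain rfl := hw.eq_append
      cases s with
      | X b =>
        simpa [RLetter.cut, RLetter.side, add_assoc, add_comm 1] using
          ih (x ++ w₁ ++ [z.letter]) w₂ y
      | Y b =>
        simpa [RLetter.cut, RLetter.side, add_assoc] using ih x w₁ (z.letter :: w₂ ++ y)
    constructor
    · rintro ⟨_, ⟨w₁, w₂, hw, rfl⟩, ht⟩
      exact ⟨w₁, w₂, hw, (htail w₁ w₂ hw).1 ht⟩
    · rintro ⟨w₁, w₂, hw, ht⟩
      exact ⟨_, ⟨w₁, w₂, hw, rfl⟩, (htail w₁ w₂ hw).2 ht⟩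

/-- One step of the chain of intervals in the definition of condensed rankers: reading `z`
before `y` narrows the interval `I` to `J`. -/
def IntervalStep (u : List A) (z y : RLetter A) (I J : ℕ × ℕ) : Prop :=
  ∃ p, stepR u z (z.anchor I) = some p ∧ p ∈ Set.Ioo I.1 I.2 ∧ J = y.cut p I

theorem IntervalStep.stepR_anchor {u : List A} {z y : RLetter A} {I J : ℕ × ℕ}
    (h : IntervalStep u z y I J) : stepR u z (z.anchor I) = some (y.anchor J) := by
  obtain ⟨p, hp, -, rfl⟩ := h
  cases y <;> exact hp

theorem IntervalStep.narrows {u : List A} {z y : RLetter A} {I J : ℕ × ℕ}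
    (h : IntervalStep u z y I J) : I.1 ≤ J.1 ∧ J.2 ≤ I.2 ∧ (I.1 < J.1 ∨ J.2 < I.2) := by
  obtain ⟨p, -, ⟨hl, hr⟩, rfl⟩ := h
  cases y <;> simp only [RLetter.cut] <;> omega

/-- `z :: t` is condensed on `u` relative to the interval `I`, as witnessed by the position `p` it
reaches and the chain `K` of intervals starting at `I`. -/
structure IsCondensingChain (u : List A) (z : RLetter A) (t : List (RLetter A)) (I : ℕ × ℕ)
    (p : ℕ) (K : ℕ → ℕ × ℕ) : Prop where
  start : K 0 = I
  eval : evalFrom u (z :: t) (z.anchor I) = some p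
  step : ∀ l x y, (z :: t)[l]? = some x → (z :: t)[l + 1]? = some y →
    IntervalStep u x y (K l) (K (l + 1))
  mem : p ∈ Set.Ioo (K t.length).1 (K t.length).2

theorem exists_isCondensingChain_iff (u : List A) (z : RLetter A) (t : List (RLetter A))
    (I : ℕ × ℕ) : (∃ p K, IsCondensingChain u z t I p K) ↔ CondensedIn u (z :: t) I := by
  induction t generalizing z I with
  | nil =>
    constructor
    · rintro ⟨p, K, rfl, heval, -, hmem⟩
      exact ⟨p, by simpa [evalFrom] using heval, hmem, by simp⟩
    · rintro ⟨p, hp, hmem, -⟩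
      exact ⟨p, fun _ => I, rfl, by simp [evalFrom, hp], by simp, hmem⟩
  | cons y t ih =>
    constructor
    · rintro ⟨p, K, rfl, heval, hstep, hmem⟩
      have hfirst := hstep 0 z y rfl rfl
      rw [evalFrom, hfirst.stepR_anchor] at heval
      obtain ⟨q, hq, hqmem, hcut⟩ := hfirst
      refine ⟨q, hq, hqmem, fun y' hy' => ?_⟩
      obtain rfl := Option.some.inj hy'
      exact (ih y _).1 ⟨p, fun l => K (l + 1), hcut, hcut ▸ heval, fun l => hstep (l + 1), hmem⟩
    · rintro ⟨q, hq, hqmem, htail⟩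
      obtain ⟨p, K, hstart, heval, hstep, hmem⟩ := (ih y _).2 (htail y rfl)
      have hfirst : IntervalStep u z y I (K 0) := ⟨q, hq, hqmem, hstart⟩
      refine ⟨p, fun | 0 => I | l + 1 => K l, rfl, ?_, ?_, hmem⟩
      · rw [evalFrom, hfirst.stepR_anchor, hstart]
        exact heval
      · rintro (_ | l) x y' hx hy'
        · obtain rfl := Option.some.inj hx
          obtain rfl := Option.some.inj hy'
          exact hfirst
        · exact hstep l x y' hx hy'

theorem lt_of_nested {i j : ℕ → ℕ} {d : ℕ} (hd : i d < j d)
    (hnested : ∀ l < d, i l ≤ i (l + 1) ∧ j (l + 1) ≤ j l) {l : ℕ} (hl : l ≤ d) : i l < j l := by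
  induction hl using Nat.decreasingInduction with
  | self => exact hd
  | of_succ l hl ih => have := hnested l hl; omega

theorem exists_isCondensingChain_of_condensed {u : List A} {z : RLetter A} {t : List (RLetter A)}
    (h : Condensed u (z :: t)) :
    ∃ p K, IsCondensingChain u z t (0, u.length + 1) p K := by
  obtain ⟨p, i, j, heval, hi, hj, hXX, hYY, hXY, hYX, hnarrow, hleft, hright⟩ := h
  have hnarrow (l : ℕ) (hl : l < t.length) :
      i l ≤ i (l + 1) ∧ j (l + 1) ≤ j l ∧ (i l < i (l + 1) ∨ j (l + 1) < j l) :=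
    hnarrow (l + 1) (by omega) (Nat.succ_lt_succ hl)
  refine ⟨p, fun l => (i l, j l), by simp [hi, hj], startPos_eq_anchor u z ▸ heval,
    fun l x y hx hy => ?_, hleft, hright⟩
  have hl : l < t.length := Nat.lt_of_succ_lt_succ (List.getElem?_eq_some_iff.1 hy).1
  have hlt : i (l + 1) < j (l + 1) := lt_of_nested (hleft.trans hright)
    (fun l hl => ⟨(hnarrow l hl).1, (hnarrow l hl).2.1⟩) hl
  have hstep := hnarrow l hl
  rcases x with a | a <;> rcases y with b | b
  · obtain ⟨hocc, hj⟩ : nextOcc u a (i l) = some (i (l + 1)) ∧ j (l + 1) = j l :=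
      hXX (l + 1) a b (by omega) hx hy
    exact ⟨_, hocc, ⟨by omega, by omega⟩, by rw [hj]; rfl⟩
  · obtain ⟨hi, hocc⟩ : i (l + 1) = i l ∧ nextOcc u a (i l) = some (j (l + 1)) :=
      hXY (l + 1) a b (by omega) hx hy
    exact ⟨_, hocc, ⟨by omega, by omega⟩, by rw [hi]; rfl⟩
  · obtain ⟨hocc, hj⟩ : prevOcc u a (j l) = some (i (l + 1)) ∧ j (l + 1) = j l :=
      hYX (l + 1) a b (by omega) hx hy
    exact ⟨_, hocc, ⟨by omega, by omega⟩, by rw [hj]; rfl⟩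
  · obtain ⟨hi, hocc⟩ : i (l + 1) = i l ∧ prevOcc u a (j l) = some (j (l + 1)) :=
      hYY (l + 1) a b (by omega) hx hy
    exact ⟨_, hocc, ⟨by omega, by omega⟩, by rw [hi]; rfl⟩

theorem IsCondensingChain.condensed {u : List A} {z : RLetter A} {t : List (RLetter A)} {p : ℕ}
    {K : ℕ → ℕ × ℕ} (h : IsCondensingChain u z t (0, u.length + 1) p K) :
    Condensed u (z :: t) := by
  refine ⟨p, fun l => (K l).1, fun l => (K l).2,
    (congrArg _ (startPos_eq_anchor u z)).trans h.eval, by simp [h.start], by simp [h.start],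
    ?XX, ?YY, ?XY, ?YX, ?narrow, h.mem.1, h.mem.2⟩
  case narrow =>
    intro l hl hlt
    obtain ⟨l, rfl⟩ := Nat.exists_eq_add_of_le' hl
    have hl : l < (z :: t).length := Nat.lt_of_succ_lt hlt
    exact (h.step l _ _ (List.getElem?_eq_getElem hl) (List.getElem?_eq_getElem hlt)).narrows
  all_goals
    intro l a b hl hx hy
    obtain ⟨l, rfl⟩ := Nat.exists_eq_add_of_le' hl
    obtain ⟨q, hq, -, hcut⟩ := h.step l _ _ hx hy
    simp only [Nat.add_sub_cancel, hcut]
  case XX | YX => exact ⟨hq, rfl⟩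
  case YY | XY => exact ⟨rfl, hq⟩

theorem condensed_cons_iff (u : List A) (z : RLetter A) (t : List (RLetter A)) :
    Condensed u (z :: t) ↔ FactorCondensed (z :: t) u :=
  calc Condensed u (z :: t)
    _ ↔ ∃ p K, IsCondensingChain u z t (0, u.length + 1) p K :=
      ⟨exists_isCondensingChain_of_condensed, fun ⟨_, _, h⟩ => h.condensed⟩
    _ ↔ CondensedIn u (z :: t) (0, u.length + 1) := exists_isCondensingChain_iff ..
    _ ↔ FactorCondensed (z :: t) u := by simpa using condensedIn_append_iff [] u [] (z :: t)

end Intervals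

section Duality

variable {α : Type*}

theorem map_flip_map_flip (r : List (RLetter α)) :
    (r.map RLetter.flip).map RLetter.flip = r := by
  simp [Function.comp_def, RLetter.flip_flip]

theorem FactorCondensed.flip {r : List (RLetter α)} {w : List α} (h : FactorCondensed r w) :
    FactorCondensed (r.map RLetter.flip) w.reverse := by
  induction r generalizing w with
  | nil => trivial
  | cons z t ih =>
    obtain ⟨w₁, w₂, hw, ht⟩ := h
    refine ⟨w₂.reverse, w₁.reverse, isFactorization_flip.2 hw, fun y hy => ?_⟩
    rw [List.head?_map] at hy
    obtain ⟨x, hx, rfl⟩ := Option.map_eq_some_iff.1 hy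
    exact x.side_flip w₁ w₂ ▸ ih (ht x hx)

theorem factorCondensed_flip {r : List (RLetter α)} {w : List α} :
    FactorCondensed (r.map RLetter.flip) w.reverse ↔ FactorCondensed r w :=
  ⟨fun h => by simpa only [map_flip_map_flip, List.reverse_reverse] using h.flip,
    FactorCondensed.flip⟩

theorem numBlocks_map_flip (r : List (RLetter α)) :
    numBlocks (r.map RLetter.flip) = numBlocks r := by
  induction r with
  | nil => rfl
  | cons z t ih =>
    rcases t with _ | ⟨y, t⟩
    · rfl
    · have hdir : sameDir z.flip y.flip = sameDir z y := by cases z <;> cases y <;> rfl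
      simp only [List.map_cons, numBlocks, hdir] at ih ⊢
      rw [ih]

theorem startsY_map_flip {r : List (RLetter α)} : startsY (r.map RLetter.flip) ↔ startsX r := by
  rcases r with _ | ⟨_ | _, t⟩ <;> simp [startsX, startsY, RLetter.flip]

theorem startsX_map_flip {r : List (RLetter α)} : startsX (r.map RLetter.flip) ↔ startsY r := by
  rw [← startsY_map_flip, map_flip_map_flip]

theorem uRX_map_flip {m n : ℕ} {r : List (RLetter α)} :
    uRX m n (r.map RLetter.flip) ↔ uRY m n r := by
  simp only [uRX, uRY, RX, RY, numBlocks_map_flip, List.length_map, startsX_map_flip,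
    startsY_map_flip]

end Duality

section Blocks

variable {α : Type*}

theorem numBlocks_X_X (a b : α) (t : List (RLetter α)) :
    numBlocks (.X a :: .X b :: t) = numBlocks (.X b :: t) := by
  simp [numBlocks, sameDir]

theorem numBlocks_X_Y (a b : α) (t : List (RLetter α)) :
    numBlocks (.X a :: .Y b :: t) = numBlocks (.Y b :: t) + 1 := by
  simp [numBlocks, sameDir, add_comm]

theorem numBlocks_cons_pos (z : RLetter α) (t : List (RLetter α)) : 0 < numBlocks (z :: t) := by
  induction t generalizing z with
  | nil => exact Nat.one_pos
  | cons y t ih => exact Nat.add_pos_right _ (ih y)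

theorem numBlocks_le_length (r : List (RLetter α)) : numBlocks r ≤ r.length := by
  induction r with
  | nil => exact le_rfl
  | cons z t ih =>
    rcases t with _ | ⟨y, t⟩
    · exact le_rfl
    · simp only [numBlocks, List.length_cons] at ih ⊢
      split <;> omega

theorem numBlocks_X_cons_le_one_iff {a : α} {t : List (RLetter α)} :
    numBlocks (.X a :: t) ≤ 1 ↔ ∃ w : List α, t = w.map RLetter.X := by
  induction t generalizing a with
  | nil => exact iff_of_true le_rfl ⟨[], rfl⟩
  | cons y t ih =>
    rcases y with b | b
    · rw [numBlocks_X_X, ih]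
      constructor
      · rintro ⟨w, rfl⟩
        exact ⟨b :: w, rfl⟩
      · rintro ⟨_ | ⟨c, w⟩, hw⟩
        · simp at hw
        · exact ⟨w, (List.cons.inj hw).2⟩
    · rw [numBlocks_X_Y]
      have hpos := numBlocks_cons_pos (.Y b) t
      refine iff_of_false (by omega) ?_
      rintro ⟨_ | ⟨c, w⟩, hw⟩ <;> simp at hw

theorem numBlocks_X_map_Y_le_two (a : α) (w : List α) :
    numBlocks (.X a :: w.map RLetter.Y) ≤ 2 := by
  rcases w with _ | ⟨b, w⟩
  · exact one_le_two
  · have hflip : (RLetter.Y b :: w.map RLetter.Y) =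
        (RLetter.X b :: w.map RLetter.X).map RLetter.flip := by simp [RLetter.flip]
    rw [List.map_cons, numBlocks_X_Y, hflip, numBlocks_map_flip]
    exact Nat.succ_le_succ (numBlocks_X_cons_le_one_iff.2 ⟨w, rfl⟩)

theorem factorCondensed_map_X {w u : List α} :
    FactorCondensed (w.map RLetter.X) u ↔ w.Sublist u := by
  induction w generalizing u with
  | nil => simp [FactorCondensed]
  | cons a w ih =>
    have hside (u₁ u₂ : List α) : (∀ y ∈ (w.map RLetter.X).head?,
        FactorCondensed (w.map RLetter.X) (y.side u₁ u₂)) ↔ w.Sublist u₂ := by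
      rw [← ih]
      cases w <;> simp [RLetter.side, FactorCondensed]
    simp only [List.map_cons, FactorCondensed, hside]
    constructor
    · rintro ⟨u₁, u₂, hu, hw⟩
      exact hu.cons_sublist_iff.2 hw
    · intro hw
      obtain ⟨u₁, u₂, hu⟩ := IsFactorization.exists_of_letter_mem (z := .X a)
        (hw.subset List.mem_cons_self)
      exact ⟨u₁, u₂, hu, hu.cons_sublist_iff.1 hw⟩

theorem factorCondensed_map_Y {w u : List α} :
    FactorCondensed (w.reverse.map RLetter.Y) u ↔ w.Sublist u := by
  have hflip : w.reverse.map RLetter.Y = (w.reverse.map RLetter.X).map RLetter.flip := by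
    simp [RLetter.flip]
  rw [hflip, ← List.reverse_reverse u, factorCondensed_flip, factorCondensed_map_X,
    List.reverse_sublist, List.reverse_reverse]

theorem factorCondensed_X_map_Y {a : α} {s u u₁ u₂ : List α}
    (hu : IsFactorization (.X a) u u₁ u₂) :
    FactorCondensed (.X a :: s.reverse.map RLetter.Y) u ↔ s.Sublist u₁ := by
  rw [← factorCondensed_map_Y]
  rcases s.reverse with _ | ⟨b, s'⟩
  · exact iff_of_true (factorCondensed_singleton.2 hu.letter_mem) trivial
  · exact hu.factorCondensed_cons_cons

/-- The letters of the leading `X`-block of a ranker. -/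
def leadingX : List (RLetter α) → List α
  | .X a :: t => a :: leadingX t
  | _ => []

theorem length_leadingX_le (r : List (RLetter α)) : (leadingX r).length ≤ r.length := by
  induction r with
  | nil => exact le_rfl
  | cons z t ih => cases z <;> simp [leadingX, ih]

/-- Once its leading `X`-block fits into the prefix, a ranker never leaves the prefix again. -/
theorem factorCondensed_prefix_iff {a : α} {t : List (RLetter α)} {w : List α} (y : List α) :
    FactorCondensed (.X a :: t) w ↔
      FactorCondensed (.X a :: t) (w ++ y) ∧ (leadingX (.X a :: t)).Sublist w := by
  induction t generalizing a w with
  | nil =>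
    simp only [factorCondensed_singleton, leadingX, List.singleton_sublist, List.mem_append]
    exact ⟨fun h => ⟨.inl h, h⟩, And.right⟩
  | cons z t ih =>
    by_cases ha : a ∈ w
    · obtain ⟨w₁, w₂, hw⟩ := IsFactorization.exists_of_letter_mem (z := .X a) ha
      rw [hw.factorCondensed_cons_cons, (hw.append_right y).factorCondensed_cons_cons, leadingX,
        hw.cons_sublist_iff]
      rcases z with b | b
      · exact ih
      · simp [RLetter.side, leadingX]
    · exact iff_of_false (fun h => ha h.letter_mem)
        fun h => ha (h.2.subset List.mem_cons_self)

theorem factorCondensed_suffix_iff {a : α} {t : List (RLetter α)} {w : List α} (x : List α) :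
    FactorCondensed (.Y a :: t) w ↔
      FactorCondensed (.Y a :: t) (x ++ w) ∧
        (leadingX ((RLetter.Y a :: t).map RLetter.flip)).reverse.Sublist w := by
  rw [← factorCondensed_flip, List.map_cons, RLetter.flip, factorCondensed_prefix_iff x.reverse,
    ← List.reverse_append, ← factorCondensed_flip (w := x ++ w),
    ← List.reverse_sublist (l₂ := w), List.reverse_reverse]
  rfl

end Blocks

section Relations

variable {m n : ℕ} {u v : List A}

theorem condensed_flip {r : List (RLetter A)} :
    Condensed u.reverse (r.map RLetter.flip) ↔ Condensed u r := by
  cases r with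
  | nil => simp [Condensed, evalR]
  | cons z t => rw [List.map_cons, condensed_cons_iff, condensed_cons_iff, ← List.map_cons,
      factorCondensed_flip]

theorem trir_reverse : trir m n u.reverse v.reverse ↔ tril m n u v := by
  have hsurj : Function.Surjective (List.map (RLetter.flip (α := A))) :=
    Function.Involutive.surjective map_flip_map_flip
  rw [trir, AgreeCond, hsurj.forall]
  simp only [uRX_map_flip, condensed_flip, tril, AgreeCond]

theorem tril_reverse : tril m n u.reverse v.reverse ↔ trir m n u v := by
  rw [← trir_reverse, List.reverse_reverse, List.reverse_reverse]

theorem trir_iff : trir m n u v ↔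
    (∀ a t, numBlocks (.X a :: t) ≤ m → t.length < n →
      (FactorCondensed (.X a :: t) u ↔ FactorCondensed (.X a :: t) v)) ∧
    (∀ a t, numBlocks (.Y a :: t) < m → t.length + 1 < n →
      (FactorCondensed (.Y a :: t) u ↔ FactorCondensed (.Y a :: t) v)) := by
  simp only [← condensed_cons_iff]
  constructor
  · intro h
    exact ⟨fun a t hb hl => h _ (.inl ⟨_, _, hb, hl, rfl, rfl, a, t, rfl⟩),
      fun a t hb hl => h _ (.inr ⟨_, _, hb, hl, rfl, rfl, a, t, rfl⟩)⟩
  · rintro ⟨hX, hY⟩ r (⟨_, _, hb, hl, rfl, rfl, a, t, rfl⟩ | ⟨_, _, hb, hl, rfl, rfl, a, t, rfl⟩)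
    · exact hX a t hb hl
    · exact hY a t hb hl

theorem tril_iff : tril m n u v ↔
    (∀ a t, numBlocks (.Y a :: t) ≤ m → t.length < n →
      (FactorCondensed (.Y a :: t) u ↔ FactorCondensed (.Y a :: t) v)) ∧
    (∀ a t, numBlocks (.X a :: t) < m → t.length + 1 < n →
      (FactorCondensed (.X a :: t) u ↔ FactorCondensed (.X a :: t) v)) := by
  simp only [← condensed_cons_iff]
  constructor
  · intro h
    exact ⟨fun a t hb hl => h _ (.inl ⟨_, _, hb, hl, rfl, rfl, a, t, rfl⟩),
      fun a t hb hl => h _ (.inr ⟨_, _, hb, hl, rfl, rfl, a, t, rfl⟩)⟩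
  · rintro ⟨hY, hX⟩ r (⟨_, _, hb, hl, rfl, rfl, a, t, rfl⟩ | ⟨_, _, hb, hl, rfl, rfl, a, t, rfl⟩)
    · exact hY a t hb hl
    · exact hX a t hb hl

theorem trir_iff_of_le (h : n ≤ m) : trir m n u v ↔ trir n n u v := by
  have hX (a : A) (t : List (RLetter A)) (hl : t.length < n) : numBlocks (.X a :: t) ≤ n :=
    (numBlocks_le_length _).trans hl
  have hY (a : A) (t : List (RLetter A)) (hl : t.length + 1 < n) : numBlocks (.Y a :: t) < n :=
    (numBlocks_le_length _).trans_lt hl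
  rw [trir_iff, trir_iff]
  exact ⟨fun huv => ⟨fun a t hb => huv.1 a t (hb.trans h), fun a t hb => huv.2 a t (hb.trans_le h)⟩,
    fun huv => ⟨fun a t _ hl => huv.1 a t (hX a t hl) hl,
      fun a t _ hl => huv.2 a t (hY a t hl) hl⟩⟩

theorem ne_imp_and_eq_imp_trir_iff :
    ((n ≠ m → trir (m + 1) n u v) ∧ (n = m → trir m n u v)) ↔ trir (m + 1) n u v := by
  rcases eq_or_ne n m with rfl | hne
  · simp [trir_iff_of_le n.le_succ]
  · simp [hne]

theorem ne_imp_and_eq_imp_tril_iff :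
    ((n ≠ m → tril (m + 1) n u v) ∧ (n = m → tril m n u v)) ↔ tril (m + 1) n u v := by
  simpa only [trir_reverse] using ne_imp_and_eq_imp_trir_iff (u := u.reverse) (v := v.reverse)

theorem trir.sublist_iff (h : trir (m + 1) n u v) {w : List A} (hw : w.length ≤ n) :
    w.Sublist u ↔ w.Sublist v := by
  rw [← factorCondensed_map_X, ← factorCondensed_map_X]
  cases w with
  | nil => rfl
  | cons a w =>
    have hblocks : numBlocks (.X a :: w.map RLetter.X) ≤ 1 :=
      numBlocks_X_cons_le_one_iff.2 ⟨w, rfl⟩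
    exact (trir_iff.1 h).1 a _ (by omega) (by simpa using hw)

theorem trir_one_iff :
    trir 1 n u v ↔ ∀ w : List A, w.length ≤ n → (w.Sublist u ↔ w.Sublist v) := by
  refine ⟨fun h w hw => h.sublist_iff hw, fun h => trir_iff.2 ⟨fun a t hb hl => ?_,
    fun a t hb _ => absurd (numBlocks_cons_pos (.Y a) t) (by omega)⟩⟩
  obtain ⟨w, rfl⟩ := numBlocks_X_cons_le_one_iff.1 hb
  rw [← List.map_cons, factorCondensed_map_X, factorCondensed_map_X]
  exact h (a :: w) (by simpa using hl)

theorem tril_one_iff :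
    tril 1 n u v ↔ ∀ w : List A, w.length ≤ n → (w.Sublist u ↔ w.Sublist v) := by
  rw [← trir_reverse, trir_one_iff, List.reverse_surjective.forall]
  simp only [List.length_reverse, List.reverse_sublist]

theorem trir.alph_eq (h : trir (m + 1) (n + 1) u v) : alph u = alph v := by
  ext a
  simpa [alph] using h.sublist_iff (w := [a]) (by simp)

theorem trir.to_tril (h : trir (m + 1) (n + 1) u v) : tril m n u v := by
  rw [trir_iff] at h
  exact tril_iff.2 ⟨fun a t hb hl => h.2 a t (by omega) (by omega),
    fun a t hb hl => h.1 a t (by omega) (by omega)⟩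

section LeftFactorization

variable {a : A} {um up vm vp : List A}

theorem trir.left_factor (h : trir (m + 1) (n + 1) u v) (hu : IsFactorization (.X a) u um up)
    (hv : IsFactorization (.X a) v vm vp) : tril m n um vm := by
  refine tril_iff.2 ⟨fun b t hb hl => ?_, fun b t hb hl => ?_⟩
  · have hcons := (trir_iff.1 h).1 a (.Y b :: t) (by rw [numBlocks_X_Y]; omega)
      (Nat.succ_lt_succ hl)
    rwa [hu.factorCondensed_cons_cons, hv.factorCondensed_cons_cons] at hcons
  · have hwhole := (trir_iff.1 h).1 b t (by omega) (by omega)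
    have hfits : (leadingX (.X b :: t)).Sublist um ↔ (leadingX (.X b :: t)).Sublist vm := by
      have hm := numBlocks_cons_pos (.X b) t
      have hlen := length_leadingX_le (.X b :: t)
      rw [← factorCondensed_X_map_Y hu, ← factorCondensed_X_map_Y hv]
      refine (trir_iff.1 h).1 a _ ((numBlocks_X_map_Y_le_two _ _).trans (by omega)) ?_
      simp only [List.length_map, List.length_reverse, List.length_cons] at hlen ⊢
      omega
    rw [factorCondensed_prefix_iff (a :: up), factorCondensed_prefix_iff (w := vm) (a :: vp),
      ← hu.1, ← hv.1, hwhole, hfits]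

theorem trir.right_factor (h : trir (m + 1) (n + 1) u v) (hu : IsFactorization (.X a) u um up)
    (hv : IsFactorization (.X a) v vm vp) : trir (m + 1) n up vp := by
  refine trir_iff.2 ⟨fun b t hb hl => ?_, fun b t hb hl => ?_⟩
  · have hcons := (trir_iff.1 h).1 a (.X b :: t) (by rwa [numBlocks_X_X]) (Nat.succ_lt_succ hl)
    rwa [hu.factorCondensed_cons_cons, hv.factorCondensed_cons_cons] at hcons
  · have hwhole := (trir_iff.1 h).2 b t hb (by omega)
    have hfits (s : List A) (hs : s.length ≤ n) : s.Sublist up ↔ s.Sublist vp := by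
      rw [← hu.cons_sublist_iff, ← hv.cons_sublist_iff]
      exact h.sublist_iff (Nat.succ_le_succ hs)
    have hlen : (leadingX ((RLetter.Y b :: t).map RLetter.flip)).reverse.length ≤ n := by
      have hle := length_leadingX_le ((RLetter.Y b :: t).map RLetter.flip)
      simp only [List.length_map, List.length_reverse, List.length_cons] at hle ⊢
      omega
    rw [factorCondensed_suffix_iff (um ++ [a]), factorCondensed_suffix_iff (w := vp) (vm ++ [a]),
      ← List.append_cons, ← List.append_cons, ← hu.1, ← hv.1, hwhole, hfits _ hlen]

end LeftFactorization

theorem trir_of_factors (halph : alph u = alph v) (htril : tril m n u v)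
    (hfactors : ∀ a um up vm vp, IsFactorization (.X a) u um up → IsFactorization (.X a) v vm vp →
      tril m n um vm ∧ trir (m + 1) n up vp) :
    trir (m + 1) (n + 1) u v := by
  refine trir_iff.2 ⟨fun a t hb hl => ?_, fun a t hb hl => (tril_iff.1 htril).1 a t (by omega)
    (by omega)⟩
  have hmem : a ∈ u ↔ a ∈ v := by simpa [alph] using Finset.ext_iff.1 halph a
  by_cases hau : a ∈ u
  swap
  · exact iff_of_false (fun h => hau h.letter_mem) (fun h => hau (hmem.2 h.letter_mem))
  obtain ⟨um, up, hu⟩ := IsFactorization.exists_of_letter_mem (z := .X a) hau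
  obtain ⟨vm, vp, hv⟩ := IsFactorization.exists_of_letter_mem (z := .X a) (hmem.1 hau)
  obtain ⟨hleft, hright⟩ := hfactors a um up vm vp hu hv
  rcases t with _ | ⟨b | b, t⟩
  · exact iff_of_true (factorCondensed_singleton.2 hu.letter_mem)
      (factorCondensed_singleton.2 hv.letter_mem)
  · rw [hu.factorCondensed_cons_cons, hv.factorCondensed_cons_cons]
    rw [numBlocks_X_X] at hb
    exact (trir_iff.1 hright).1 b t hb (Nat.lt_of_succ_lt_succ hl)
  · rw [hu.factorCondensed_cons_cons, hv.factorCondensed_cons_cons]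
    rw [numBlocks_X_Y] at hb
    exact (tril_iff.1 hleft).1 b t (by omega) (Nat.lt_of_succ_lt_succ hl)

theorem trir_succ_succ_iff : trir (m + 1) (n + 1) u v ↔
    alph u = alph v ∧ tril m n u v ∧ ∀ a um up vm vp,
      IsFactorization (.X a) u um up → IsFactorization (.X a) v vm vp →
        tril m n um vm ∧ trir (m + 1) n up vp :=
  ⟨fun h => ⟨h.alph_eq, h.to_tril,
      fun _ _ _ _ _ hu hv => ⟨h.left_factor hu hv, h.right_factor hu hv⟩⟩,
    fun ⟨halph, htril, hfactors⟩ => trir_of_factors halph htril hfactors⟩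

theorem tril_succ_succ_iff : tril (m + 1) (n + 1) u v ↔
    alph u = alph v ∧ trir m n u v ∧ ∀ a um up vm vp,
      IsFactorization (.Y a) u um up → IsFactorization (.Y a) v vm vp →
        trir m n up vp ∧ tril (m + 1) n um vm := by
  have halph (w : List A) : alph w.reverse = alph w := List.toFinset_reverse
  rw [← trir_reverse, trir_succ_succ_iff, halph, halph, tril_reverse]
  refine and_congr_right' (and_congr_right' (forall_congr' fun a => ?_))
  have hflip {w w₁ w₂ : List A} (h : IsFactorization (.X a) w.reverse w₁ w₂) :
      IsFactorization (.Y a) w w₂.reverse w₁.reverse := by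
    rw [← isFactorization_flip, List.reverse_reverse, List.reverse_reverse]
    exact h
  constructor <;> intro h um up vm vp hu hv
  · exact (h _ _ _ _ (isFactorization_flip.2 hu) (isFactorization_flip.2 hv)).imp
      tril_reverse.1 trir_reverse.1
  · exact (h _ _ _ _ (hflip hu) (hflip hv)).imp trir_reverse.1 tril_reverse.1

end Relations

/-- Characteristic properties of the relations `⊳_{m,n}` and `⊲_{m,n}`. -/
theorem statement3 :
    (∀ n : ℕ, 1 ≤ n → ∀ u v : List A,
       (trir 1 n u v ↔ tril 1 n u v) ∧
       (trir 1 n u v ↔ ∀ w : List A, w.length ≤ n → (w.Sublist u ↔ w.Sublist v))) ∧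
    (∀ m n : ℕ, 2 ≤ m → m ≤ n → ∀ u v : List A,
       (trir m n u v ↔
         (alph u = alph v ∧ tril (m-1) (n-1) u v ∧
          ∀ (a : A) (um up vm vp : List A),
            u = um ++ a :: up → a ∉ um → v = vm ++ a :: vp → a ∉ vm →
            (tril (m-1) (n-1) um vm ∧
             (n ≠ m → trir m (n-1) up vp) ∧ (n = m → trir (m-1) (n-1) up vp))))) ∧
    (∀ m n : ℕ, 2 ≤ m → m ≤ n → ∀ u v : List A,
       (tril m n u v ↔
         (alph u = alph v ∧ trir (m-1) (n-1) u v ∧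
          ∀ (a : A) (um up vm vp : List A),
            u = um ++ a :: up → a ∉ up → v = vm ++ a :: vp → a ∉ vp →
            (trir (m-1) (n-1) up vp ∧
             (n ≠ m → tril m (n-1) um vm) ∧ (n = m → tril (m-1) (n-1) um vm))))) := by
  refine ⟨fun n _ u v => ⟨trir_one_iff.trans tril_one_iff.symm, trir_one_iff⟩, ?_, ?_⟩
  all_goals
    intro m n hm hmn u v
    obtain ⟨m, rfl⟩ := Nat.exists_eq_add_of_le' (one_le_two.trans hm)
    obtain ⟨n, rfl⟩ := Nat.exists_eq_add_of_le' ((one_le_two.trans hm).trans hmn)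
    simp only [Nat.add_sub_cancel, ne_eq, Nat.add_right_cancel_iff]
  · simpa only [ne_imp_and_eq_imp_trir_iff, IsFactorization, and_imp] using trir_succ_succ_iff
  · simpa only [ne_imp_and_eq_imp_tril_iff, IsFactorization, and_imp] using tril_succ_succ_iff

end RankerPaper
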